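/- arXiv:2401.10117 — 5 statements merged into one kernel-verified Lean document; each statement's English description precedes it below -/
import Mathlib

section
/- Let (U, W, υ, φ) be a topological gluing datum over an index set I, with glued space Q and canonical maps ι i : U i → Q. Then for all i, j ∈ I the images of the overlap pieces compute the intersections: ι i '' (range (υ i j)) = ι j '' (range (υ j i)) = range (ι i) ∩ range (ι j). -/
open Set Function Topology

/-- The gluing relation on the sigma type `Σ i, U i` associated with a gluing datum:
`⟨i, x⟩ ~ ⟨j, y⟩` iff there exists `u : W i j` with `υ i j u = x` and `υ j i (φ i j u) = y`. -/
def glueRel {I : Type*} (U : I → Type*) (W : I → I → Type*)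
    (υ : ∀ i j, W i j → U i) (φ : ∀ i j, W i j → W j i) :
    (Σ i, U i) → (Σ i, U i) → Prop :=
  fun p q => ∃ u : W p.1 q.1, υ p.1 q.1 u = p.2 ∧ υ q.1 p.1 (φ p.1 q.1 u) = q.2

/-- The glued space: the quotient of `Σ i, U i` by the gluing relation, equipped with the
quotient topology. -/
abbrev Glued {I : Type*} (U : I → Type*) (W : I → I → Type*)
    (υ : ∀ i j, W i j → U i) (φ : ∀ i j, W i j → W j i) : Type _ :=
  Quot (glueRel U W υ φ)

/-- The canonical map `U i → Q` into the glued space. -/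
def glueι {I : Type*} (U : I → Type*) (W : I → I → Type*)
    (υ : ∀ i j, W i j → U i) (φ : ∀ i j, W i j → W j i) (i : I) :
    U i → Glued U W υ φ :=
  fun x => Quot.mk _ ⟨i, x⟩

/-- The images of the overlap pieces in the glued space compute the pairwise intersections of
the images of the pieces. -/
theorem glueι_image_overlap {I : Type*}
    (U : I → Type*) [∀ i, TopologicalSpace (U i)]
    (W : I → I → Type*) [∀ i j, TopologicalSpace (W i j)]
    (υ : ∀ i j, W i j → U i) (φ : ∀ i j, W i j → W j i)
    (hυc : ∀ i j, Continuous (υ i j)) (hφc : ∀ i j, Continuous (φ i j))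
    (hdiag_bij : ∀ i, Function.Bijective (υ i i))
    (hdiag : ∀ i (u : W i i), υ i i (φ i i u) = υ i i u)
    (hφφ : ∀ i j (u : W i j), φ j i (φ i j u) = u)
    (hcoc : ∀ i j k (u : W i j) (v : W j k),
      υ j i (φ i j u) = υ j k v →
      ∃ w : W i k, υ i k w = υ i j u ∧ υ k i (φ i k w) = υ k j (φ j k v))
    (i j : I) :
    glueι U W υ φ i '' (Set.range (υ i j)) = glueι U W υ φ j '' (Set.range (υ j i)) ∧
    glueι U W υ φ i '' (Set.range (υ i j)) =
      Set.range (glueι U W υ φ i) ∩ Set.range (glueι U W υ φ j) := by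
  have heq : Equivalence (glueRel U W υ φ) := by
    refine ⟨?_, ?_, ?_⟩
    · rintro ⟨a, x⟩
      obtain ⟨u, hu⟩ := (hdiag_bij a).2 x
      exact ⟨u, hu, (hdiag a u).trans hu⟩
    · rintro ⟨a, x⟩ ⟨b, y⟩ ⟨u, hx, hy⟩
      refine ⟨φ a b u, hy, ?_⟩
      dsimp only at *
      rw [hφφ]
      exact hx
    · rintro ⟨a, x⟩ ⟨b, y⟩ ⟨c, z⟩ ⟨u, hx, hy⟩ ⟨v, hy', hz⟩
      obtain ⟨w, h1, h2⟩ := hcoc a b c u v (hy.trans hy'.symm)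
      exact ⟨w, h1.trans hx, h2.trans hz⟩
  have hglue : ∀ a b (u : W a b),
      glueι U W υ φ a (υ a b u) = glueι U W υ φ b (υ b a (φ a b u)) :=
    fun a b u => Quot.sound ⟨u, rfl, rfl⟩
  have hsub : ∀ a b, glueι U W υ φ a '' (Set.range (υ a b)) ⊆
      glueι U W υ φ b '' (Set.range (υ b a)) := by
    rintro a b _ ⟨_, ⟨u, rfl⟩, rfl⟩
    exact ⟨_, ⟨φ a b u, rfl⟩, (hglue a b u).symm⟩
  refine ⟨Set.Subset.antisymm (hsub i j) (hsub j i), Set.Subset.antisymm ?_ ?_⟩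
  · rintro _ ⟨_, ⟨u, rfl⟩, rfl⟩
    exact ⟨⟨_, rfl⟩, ⟨_, (hglue i j u).symm⟩⟩
  · rintro _ ⟨⟨x, rfl⟩, ⟨y, hy⟩⟩
    have h : glueRel U W υ φ ⟨i, x⟩ ⟨j, y⟩ :=
      heq.eqvGen_iff.1 (Quot.eqvGen_exact hy.symm)
    obtain ⟨u, hx, -⟩ := h
    exact ⟨x, ⟨u, hx⟩, rfl⟩
end

section
/- Let (U, W, υ, φ) be a topological gluing datum over an index set I, with glued space Q and canonical maps ι i : U i → Q. Then Q satisfies the universal property of the glued-up object: for every topological space Q' and every family of continuous maps f i : U i → Q' satisfying f i ∘ (υ i j) = f j ∘ (υ j i) ∘ (φ i j) for all i, j ∈ I, there exists a unique continuous map μ : Q → Q' such that μ ∘ ι i = f i for every i ∈ I. -/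
open Set Function Topology

/-- Universal property of the glued space: any compatible family of continuous maps on the
pieces factors uniquely through a continuous map on the glued space. -/
theorem glued_universal_property {I : Type*}
    (U : I → Type*) [∀ i, TopologicalSpace (U i)]
    (W : I → I → Type*) [∀ i j, TopologicalSpace (W i j)]
    (υ : ∀ i j, W i j → U i) (φ : ∀ i j, W i j → W j i)
    (hυc : ∀ i j, Continuous (υ i j)) (hφc : ∀ i j, Continuous (φ i j))
    (hdiag_bij : ∀ i, Function.Bijective (υ i i))
    (hdiag : ∀ i (u : W i i), υ i i (φ i i u) = υ i i u)
    (hφφ : ∀ i j (u : W i j), φ j i (φ i j u) = u)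
    (hcoc : ∀ i j k (u : W i j) (v : W j k),
      υ j i (φ i j u) = υ j k v →
      ∃ w : W i k, υ i k w = υ i j u ∧ υ k i (φ i k w) = υ k j (φ j k v))
    (Q' : Type*) [TopologicalSpace Q'] (f : ∀ i, U i → Q')
    (hfc : ∀ i, Continuous (f i))
    (hf : ∀ i j, (f i) ∘ (υ i j) = (f j) ∘ (υ j i) ∘ (φ i j)) :
    ∃! μ : Glued U W υ φ → Q', Continuous μ ∧ ∀ i, μ ∘ glueι U W υ φ i = f i := by
  have hrel : ∀ p q : (Σ i, U i), glueRel U W υ φ p q → f p.1 p.2 = f q.1 q.2 := by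
    rintro ⟨i, x⟩ ⟨j, y⟩ ⟨u, hx, hy⟩
    dsimp only at u hx hy ⊢
    subst hx hy
    exact congrFun (hf i j) u
  refine ⟨Quot.lift (fun p => f p.1 p.2) hrel, ⟨?_, fun i => rfl⟩, ?_⟩
  · exact continuous_quot_lift hrel (continuous_sigma hfc)
  · rintro ν ⟨-, hν⟩
    funext q
    induction q using Quot.ind with
    | mk p => exact congrFun (hν p.1) p.2
end

section
/- Let (U, W, υ, φ) be a topological gluing datum over an index set I, with glued space Q and canonical maps ι i : U i → Q. Let Q' be a topological space and f i : U i → Q' a family of continuous injective maps such that: (a) f i ∘ (υ i j) = f j ∘ (υ j i) ∘ (φ i j) for all i, j; (b) Q' = ⋃_{i ∈ I} range (f i); (c) range (f i) ∩ range (f j) = f i '' (range (υ i j)) for all i, j; and (d) the topology of Q' is the final (coinduced) topology with respect to the family {f i}. Then the unique continuous map μ : Q → Q' satisfying μ ∘ ι i = f i for all i is a homeomorphism; in particular Q' is a glued-up object along the gluing datum. -/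
open Set Function Topology

/-- Recognition theorem for glued-up objects: if `Q'` carries a compatible family of continuous
injective maps whose images cover `Q'`, whose pairwise intersections are computed by the
overlaps, and whose topology is the final topology for the family, then the canonical map from
the glued space to `Q'` is a homeomorphism. -/
theorem glued_recognition {I : Type*}
    (U : I → Type*) [∀ i, TopologicalSpace (U i)]
    (W : I → I → Type*) [∀ i j, TopologicalSpace (W i j)]
    (υ : ∀ i j, W i j → U i) (φ : ∀ i j, W i j → W j i)
    (hυc : ∀ i j, Continuous (υ i j)) (hφc : ∀ i j, Continuous (φ i j))
    (hdiag_bij : ∀ i, Function.Bijective (υ i i))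
    (hdiag : ∀ i (u : W i i), υ i i (φ i i u) = υ i i u)
    (hφφ : ∀ i j (u : W i j), φ j i (φ i j u) = u)
    (hcoc : ∀ i j k (u : W i j) (v : W j k),
      υ j i (φ i j u) = υ j k v →
      ∃ w : W i k, υ i k w = υ i j u ∧ υ k i (φ i k w) = υ k j (φ j k v))
    (Q' : Type*) [tQ' : TopologicalSpace Q'] (f : ∀ i, U i → Q')
    (hfc : ∀ i, Continuous (f i))
    (hfinj : ∀ i, Function.Injective (f i))
    (ha : ∀ i j, (f i) ∘ (υ i j) = (f j) ∘ (υ j i) ∘ (φ i j))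
    (hb : (⋃ i, Set.range (f i)) = Set.univ)
    (hc : ∀ i j, Set.range (f i) ∩ Set.range (f j) = f i '' (Set.range (υ i j)))
    (hd : tQ' = ⨆ i, TopologicalSpace.coinduced (f i) inferInstance)
    (μ : Glued U W υ φ → Q') (hμc : Continuous μ)
    (hμ : ∀ i, μ ∘ glueι U W υ φ i = f i) :
    IsHomeomorph μ := by
  have hμ' : ∀ i x, μ (Quot.mk _ ⟨i, x⟩) = f i x := fun i x => congrFun (hμ i) x
  have hinj : Function.Injective μ := by
    rintro ⟨i, x⟩ ⟨j, y⟩ h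
    have h : f i x = f j y := by
      rw [← hμ' i x, ← hμ' j y]
      exact h
    have hm : f i x ∈ f i '' (Set.range (υ i j)) := by
      rw [← hc i j]
      exact ⟨⟨x, rfl⟩, ⟨y, h.symm⟩⟩
    obtain ⟨_, ⟨u, rfl⟩, hu⟩ := hm
    refine Quot.sound ⟨u, hfinj i hu, hfinj j ?_⟩
    have := congrFun (ha i j) u
    simp only [Function.comp_apply] at this
    rw [← h, ← hu, this]
  have hsurj : Function.Surjective μ := by
    intro q
    have hq : q ∈ ⋃ i, Set.range (f i) := by
      rw [hb]
      trivial
    obtain ⟨i, x, rfl⟩ := Set.mem_iUnion.1 hq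
    exact ⟨_, hμ' i x⟩
  refine ⟨hμc, ?_, hinj, hsurj⟩
  intro s hs
  rw [hd, isOpen_iSup_iff]
  intro i
  rw [isOpen_coinduced]
  have hcont : Continuous (glueι U W υ φ i) :=
    continuous_quot_mk.comp continuous_sigmaMk
  have he : f i ⁻¹' (μ '' s) = glueι U W υ φ i ⁻¹' s := by
    rw [← hμ i, Set.preimage_comp, Set.preimage_image_eq _ hinj]
  rw [he]
  exact hs.preimage hcont
end

section
/- Let (U, W, υ, φ) be a topological gluing datum over an index set I, with glued space Q and canonical maps ι i : U i → Q. Then for all i, j ∈ I and every subset V ⊆ U i, one has the preimage formula (ι j)⁻¹ (ι i '' V) = (υ j i) '' ((φ i j) '' ((υ i j)⁻¹ V)). -/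
open Set Function Topology

/-- Preimage formula for the canonical maps into the glued space. -/
theorem glueι_preimage_image {I : Type*}
    (U : I → Type*) [∀ i, TopologicalSpace (U i)]
    (W : I → I → Type*) [∀ i j, TopologicalSpace (W i j)]
    (υ : ∀ i j, W i j → U i) (φ : ∀ i j, W i j → W j i)
    (hυc : ∀ i j, Continuous (υ i j)) (hφc : ∀ i j, Continuous (φ i j))
    (hdiag_bij : ∀ i, Function.Bijective (υ i i))
    (hdiag : ∀ i (u : W i i), υ i i (φ i i u) = υ i i u)
    (hφφ : ∀ i j (u : W i j), φ j i (φ i j u) = u)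
    (hcoc : ∀ i j k (u : W i j) (v : W j k),
      υ j i (φ i j u) = υ j k v →
      ∃ w : W i k, υ i k w = υ i j u ∧ υ k i (φ i k w) = υ k j (φ j k v))
    (i j : I) (V : Set (U i)) :
    (glueι U W υ φ j) ⁻¹' ((glueι U W υ φ i) '' V) =
      (υ j i) '' ((φ i j) '' ((υ i j) ⁻¹' V)) := by
  have heqv : Equivalence (glueRel U W υ φ) := by
    refine ⟨?_, ?_, ?_⟩
    · rintro ⟨a, x⟩
      obtain ⟨u, hu⟩ := (hdiag_bij a).2 x
      exact ⟨u, hu, (hdiag a u).trans hu⟩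
    · rintro ⟨a, x⟩ ⟨b, y⟩ ⟨u, hu, hv⟩
      refine ⟨φ a b u, hv, ?_⟩
      dsimp only at *
      rw [hφφ, hu]
    · rintro ⟨a, x⟩ ⟨b, y⟩ ⟨c, z⟩ ⟨u, hu, hv⟩ ⟨v, hu', hv'⟩
      obtain ⟨w, h1, h2⟩ := hcoc a b c u v (hv.trans hu'.symm)
      exact ⟨w, h1.trans hu, h2.trans hv'⟩
  ext y
  constructor
  · rintro ⟨x, hx, hxy⟩
    obtain ⟨u, hu, hv⟩ := heqv.eqvGen_iff.1 (Quot.eqvGen_exact hxy)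
    dsimp only at u hu hv
    refine ⟨_, ⟨u, ?_, rfl⟩, hv⟩
    rw [mem_preimage, hu]
    exact hx
  · rintro ⟨_, ⟨u, hu, rfl⟩, rfl⟩
    exact ⟨υ i j u, hu, Quot.sound ⟨u, rfl, rfl⟩⟩
end

section
/- Let (U, W, υ, φ) be a topological gluing datum over an index set I, with glued space Q and canonical maps ι i : U i → Q, and assume in addition that every map υ i j : W i j → U i is an open map. Then for every i ∈ I, the map ι i : U i → Q is an open topological embedding (it is injective, continuous, and open); in particular range (ι i) is an open subset of Q and Q = ⋃_{i ∈ I} range (ι i) is an open cover of Q. -/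
open Set Function Topology

/-- If all the structure maps `υ i j` are open, then each canonical map into the glued space is
an open topological embedding, its range is open, and the ranges form an open cover. -/
theorem glueι_isOpenEmbedding {I : Type*}
    (U : I → Type*) [∀ i, TopologicalSpace (U i)]
    (W : I → I → Type*) [∀ i j, TopologicalSpace (W i j)]
    (υ : ∀ i j, W i j → U i) (φ : ∀ i j, W i j → W j i)
    (hυc : ∀ i j, Continuous (υ i j)) (hφc : ∀ i j, Continuous (φ i j))
    (hdiag_bij : ∀ i, Function.Bijective (υ i i))
    (hdiag : ∀ i (u : W i i), υ i i (φ i i u) = υ i i u)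
    (hφφ : ∀ i j (u : W i j), φ j i (φ i j u) = u)
    (hcoc : ∀ i j k (u : W i j) (v : W j k),
      υ j i (φ i j u) = υ j k v →
      ∃ w : W i k, υ i k w = υ i j u ∧ υ k i (φ i k w) = υ k j (φ j k v))
    (hυo : ∀ i j, IsOpenMap (υ i j)) :
    (∀ i, IsOpenEmbedding (glueι U W υ φ i)) ∧
    (∀ i, Function.Injective (glueι U W υ φ i) ∧ Continuous (glueι U W υ φ i) ∧
      IsOpenMap (glueι U W υ φ i)) ∧
    (∀ i, IsOpen (Set.range (glueι U W υ φ i))) ∧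
    (⋃ i, Set.range (glueι U W υ φ i)) = Set.univ := by
  have hequiv : Equivalence (glueRel U W υ φ) := by
    refine ⟨?_, ?_, ?_⟩
    · rintro ⟨i, x⟩
      obtain ⟨u, hu⟩ := (hdiag_bij i).2 x
      exact ⟨u, hu, (hdiag i u).trans hu⟩
    · rintro ⟨i, x⟩ ⟨j, y⟩ ⟨u, h1, h2⟩
      refine ⟨φ i j u, h2, ?_⟩
      dsimp only at *
      rw [hφφ]
      exact h1
    · rintro ⟨i, x⟩ ⟨j, y⟩ ⟨k, z⟩ ⟨u, h1, h2⟩ ⟨v, h3, h4⟩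
      obtain ⟨w, hw1, hw2⟩ := hcoc i j k u v (h2.trans h3.symm)
      exact ⟨w, hw1.trans h1, hw2.trans h4⟩
  have hmk : ∀ p q : (Σ i, U i),
      (Quot.mk (glueRel U W υ φ) p = Quot.mk (glueRel U W υ φ) q) ↔ glueRel U W υ φ p q := by
    intro p q
    rw [Quot.eq, hequiv.eqvGen_iff]
  have hinj : ∀ i, Function.Injective (glueι U W υ φ i) := by
    intro i x y h
    obtain ⟨u, h1, h2⟩ := (hmk ⟨i, x⟩ ⟨i, y⟩).1 h
    exact h1.symm.trans ((hdiag i u).symm.trans h2)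
  have hcont : ∀ i, Continuous (glueι U W υ φ i) := fun i =>
    continuous_quot_mk.comp continuous_sigmaMk
  have hopen : ∀ i, IsOpenMap (glueι U W υ φ i) := by
    intro i V hV
    rw [← isQuotientMap_quot_mk.isOpen_preimage, isOpen_sigma_iff]
    intro j
    have heq : Sigma.mk j ⁻¹' (Quot.mk (glueRel U W υ φ) ⁻¹' (glueι U W υ φ i '' V))
        = υ j i '' ((fun u => υ i j (φ j i u)) ⁻¹' V) := by
      ext y
      constructor
      · rintro ⟨x, hx, h⟩
        obtain ⟨u, h1, h2⟩ := (hmk ⟨j, y⟩ ⟨i, x⟩).1 h.symm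
        refine ⟨u, ?_, h1⟩
        change υ i j (φ j i u) ∈ V
        have h3 : υ i j (φ j i u) = x := h2
        rwa [h3]
      · rintro ⟨u, hu, rfl⟩
        exact ⟨υ i j (φ j i u), hu, ((hmk ⟨j, υ j i u⟩ ⟨i, _⟩).2 ⟨u, rfl, rfl⟩).symm⟩
    rw [heq]
    exact hυo j i _ (hV.preimage ((hυc i j).comp (hφc j i)))
  refine ⟨fun i => .of_continuous_injective_isOpenMap (hcont i) (hinj i) (hopen i),
    fun i => ⟨hinj i, hcont i, hopen i⟩, fun i => (hopen i).isOpen_range, ?_⟩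
  rw [Set.eq_univ_iff_forall]
  rintro ⟨i, x⟩
  exact Set.mem_iUnion.2 ⟨i, x, rfl⟩
end
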